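/- Let A be a unital C*-algebra whose spectrum is Hausdorff. Then the restriction map res : → Ẑ(A), sending the class of an irreducible representation λ to the class of λ restricted to the center Z(A) (a character of Z(A)), is injective, hence a homeomorphism from the compact space onto Ẑ(A). -/

import Mathlib

/-- An irreducible representation of the C*-algebra `A` on a complex Hilbert
space. -/
structure IrredRep (A : Type) [CStarAlgebra A] where
  /-- the underlying Hilbert space -/
  H : Type
  [normed : NormedAddCommGroup H]
  [ips : InnerProductSpace ℂ H]
  [complete : CompleteSpace H]
  [nontriv : Nontrivial H]
  /-- the representation map -/
  ρ : A →⋆ₐ[ℂ] (H →L[ℂ] H)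
  /-- irreducibility: the only closed invariant subspaces are `{0}` and `H` -/
  irred : ∀ S : Submodule ℂ H, IsClosed (S : Set H) →
    (∀ (a : A), ∀ x ∈ S, ρ a x ∈ S) → S = ⊥ ∨ S = ⊤

attribute [instance] IrredRep.normed IrredRep.ips IrredRep.complete IrredRep.nontriv

/-- Unitary equivalence of irreducible representations. -/
def UEquiv {A : Type} [CStarAlgebra A] (r₁ r₂ : IrredRep A) : Prop :=
  ∃ u : r₁.H ≃ₗᵢ[ℂ] r₂.H, ∀ (a : A) (x : r₁.H), r₂.ρ a (u x) = u (r₁.ρ a x)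

/-!
The heart is the Dauns-Hofmann theorem: every continuous function `f` on `Â` is the scalar by which
some central element acts. For an open cover `U₁, …, Uₙ` of `Â`, the elements annihilated outside
the `Uᵢ` form ideals that together generate `A`, for otherwise some irreducible representation would
kill a vector through all of them. This yields `eᵢ` vanishing outside `Uᵢ` with
`∑ star eᵢ * eᵢ = 1`. If `f` is within `ε` of `f xᵢ` on `Uᵢ`, then `∑ f xᵢ • (star eᵢ * eᵢ)` acts
in every irreducible representation as the value of `f` there, up to `ε`, and one lets `ε → 0`.

When `Â` is Hausdorff, it is compact Hausdorff, so continuous functions, and hence the center,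
separate its points: the restriction map is injective. By Gelfand duality for `Z(A)` it is
continuous, and its range is compact; a character outside the range would give a nonzero central
element killed by all irreducible representations, so it is surjective.
-/

open scoped ComplexOrder InnerProductSpace

section States

variable {A : Type*} [CStarAlgebra A]

variable (A) in
/-- The states of a unital C*-algebra, encoded as the functionals of norm at most one with
`φ 1 = 1`. They sit in the weak dual because their extreme points are obtained by compactness. -/
def stateSpace : Set (WeakDual ℂ A) := {φ | φ 1 = 1 ∧ ∀ a, ‖φ a‖ ≤ ‖a‖}

theorem isCompact_stateSpace : IsCompact (stateSpace A) := by
  have h : stateSpace A = {φ | φ 1 = 1} ∩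
      WeakDual.toStrongDual ⁻¹' Metric.closedBall (0 : StrongDual ℂ A) 1 := by
    ext φ
    refine and_congr_right fun _ ↦ ?_
    rw [Set.mem_preimage, mem_closedBall_zero_iff,
      ContinuousLinearMap.opNorm_le_iff zero_le_one]
    simp only [one_mul]
    rfl
  rw [h]
  exact (WeakDual.isCompact_closedBall (0 : StrongDual ℂ A) 1).inter_left
    (isClosed_eq (WeakDual.eval_continuous 1) continuous_const)

theorem norm_add_smul_one_sq_le {a : A} (ha : IsSelfAdjoint a) (t : ℝ) :
    ‖a + (t * Complex.I) • (1 : A)‖ ^ 2 ≤ ‖a‖ ^ 2 + t ^ 2 := by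
  rcases subsingleton_or_nontrivial A with hA | hA
  · rw [Subsingleton.elim (_ + _) (0 : A), norm_zero, zero_pow two_ne_zero]
    positivity
  have hstar : star (a + (t * Complex.I) • (1 : A)) * (a + (t * Complex.I) • (1 : A)) =
      a * a + ((t ^ 2 : ℝ) : ℂ) • (1 : A) := by
    have hI : -(t * Complex.I * (t * Complex.I)) = ((t ^ 2 : ℝ) : ℂ) := by
      push_cast
      linear_combination (-(t : ℂ) ^ 2) * Complex.I_sq
    rw [← hI, star_add, ha.star_eq, star_smul, star_one, star_mul', Complex.star_def,
      Complex.conj_ofReal, Complex.conj_I]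
    simp only [add_mul, mul_add, smul_mul_assoc, mul_smul_comm, one_mul, mul_one]
    module
  rw [sq ‖_‖, ← CStarRing.norm_star_mul_self, hstar, sq ‖a‖]
  refine (norm_add_le _ _).trans (add_le_add (norm_mul_le _ _) (le_of_eq ?_))
  rw [norm_smul, norm_one, mul_one, Complex.norm_real, Real.norm_of_nonneg (sq_nonneg t)]

namespace stateSpace

variable {φ : WeakDual ℂ A}

theorem apply_im_eq_zero (hφ : φ ∈ stateSpace A) {a : A} (ha : IsSelfAdjoint a) :
    (φ a).im = 0 := by
  have hsq (t : ℝ) : ((φ a).im + t) ^ 2 ≤ ‖a‖ ^ 2 + t ^ 2 := by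
    have hshift : φ (a + (t * Complex.I) • (1 : A)) = φ a + t * Complex.I := by
      rw [map_add, map_smul, hφ.1, smul_eq_mul, mul_one]
    have him : |(φ a).im + t| ≤ ‖a + (t * Complex.I) • (1 : A)‖ := by
      refine le_trans ?_ (hφ.2 _)
      simpa [hshift] using Complex.abs_im_le_norm (φ a + t * Complex.I)
    calc ((φ a).im + t) ^ 2 = |(φ a).im + t| ^ 2 := (sq_abs _).symm
      _ ≤ ‖a + (t * Complex.I) • (1 : A)‖ ^ 2 := by gcongr
      _ ≤ ‖a‖ ^ 2 + t ^ 2 := norm_add_smul_one_sq_le ha t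
  by_contra h
  have htop := hsq ((‖a‖ ^ 2 + 1) / (2 * (φ a).im))
  have hcancel : 2 * (φ a).im * ((‖a‖ ^ 2 + 1) / (2 * (φ a).im)) = ‖a‖ ^ 2 + 1 := by
    field_simp
  nlinarith [sq_nonneg (φ a).im]

theorem apply_nonneg [PartialOrder A] [StarOrderedRing A] (hφ : φ ∈ stateSpace A) {a : A}
    (ha : 0 ≤ a) : 0 ≤ φ a := by
  have hsa := IsSelfAdjoint.of_nonneg ha
  have hnorm : ‖algebraMap ℝ A ‖a‖ - a‖ ≤ ‖a‖ := by
    rw [CStarAlgebra.norm_le_iff_le_algebraMap _ (norm_nonneg a)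
      (sub_nonneg.2 hsa.le_algebraMap_norm_self)]
    exact sub_le_self _ ha
  have hφa : φ (algebraMap ℝ A ‖a‖ - a) = ‖a‖ - φ a := by
    rw [map_sub, Algebra.algebraMap_eq_smul_one, ← Complex.coe_smul, map_smul, hφ.1,
      smul_eq_mul, mul_one]
  have hre : ‖a‖ - (φ a).re ≤ ‖a‖ := by
    simpa [hφa] using (Complex.re_le_norm _).trans ((hφ.2 _).trans hnorm)
  exact Complex.nonneg_iff.2 ⟨by linarith, (apply_im_eq_zero hφ hsa).symm⟩

/-- A state as a positive linear map, the input of the GNS construction. -/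
noncomputable def toPositiveLinearMap [PartialOrder A] [StarOrderedRing A]
    (hφ : φ ∈ stateSpace A) : A →ₚ[ℂ] ℂ :=
  PositiveLinearMap.mk₀ φ.toLinearMap fun _ ha ↦ apply_nonneg hφ ha

theorem apply_eq_zero_of_apply_star_mul_self_eq_zero (hφ : φ ∈ stateSpace A) {a : A}
    (ha : φ (star a * a) = 0) : φ a = 0 := by
  let := CStarAlgebra.spectralOrder A
  have := CStarAlgebra.spectralOrderedRing A
  let f := toPositiveLinearMap hφ
  have hinner (b c : A) : ⟪f.toPreGNS b, f.toPreGNS c⟫_ℂ = φ (star b * c) :=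
    PositiveLinearMap.preGNS_inner_def f _ _
  have hnorm : ‖f.toPreGNS a‖ = 0 := by
    rw [norm_eq_sqrt_re_inner (𝕜 := ℂ), hinner, ha, map_zero, Real.sqrt_zero]
  have hcs := norm_inner_le_norm (𝕜 := ℂ) (f.toPreGNS 1) (f.toPreGNS a)
  rw [hinner, star_one, one_mul, hnorm, mul_zero] at hcs
  exact norm_le_zero_iff.1 hcs

theorem isExtreme_vanishing (L : Ideal A) :
    IsExtreme ℝ (stateSpace A) {φ ∈ stateSpace A | ∀ a ∈ L, φ a = 0} where
  subset _ hφ := hφ.1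
  left_mem_of_mem_openSegment := by
    rintro φ₁ h₁ φ₂ h₂ _ ⟨-, hL⟩ ⟨s, t, hs, ht, -, rfl⟩
    refine ⟨h₁, fun a ha ↦ apply_eq_zero_of_apply_star_mul_self_eq_zero h₁ ?_⟩
    let := CStarAlgebra.spectralOrder A
    have := CStarAlgebra.spectralOrderedRing A
    have hsum : s • φ₁ (star a * a) + t • φ₂ (star a * a) = 0 := hL _ (L.mul_mem_left _ ha)
    have hzero := ((add_eq_zero_iff_of_nonneg
      (smul_nonneg hs.le (apply_nonneg h₁ (star_mul_self_nonneg a)))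
      (smul_nonneg ht.le (apply_nonneg h₂ (star_mul_self_nonneg a)))).1 hsum).1
    exact (smul_eq_zero.1 hzero).resolve_left hs.ne'

theorem exists_mem_vanishing {L : Ideal A} (hL : L ≠ ⊤) :
    ∃ φ ∈ stateSpace A, ∀ a ∈ L, φ a = 0 := by
  have : Nontrivial A := not_subsingleton_iff_nontrivial.1 fun h ↦ hL (Subsingleton.elim _ _)
  let S : Submodule ℂ A := L.restrictScalars ℂ
  have hone : ‖(S.mkQ 1 : A ⧸ S)‖ = 1 := by
    refine le_antisymm ((Submodule.Quotient.norm_mk_le S 1).trans norm_one.le) ?_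
    by_contra! hlt
    obtain ⟨m, hm, hm_norm⟩ := Submodule.Quotient.norm_mk_lt (S.mkQ 1) (sub_pos.2 hlt)
    rw [add_sub_cancel] at hm_norm
    exact hL (L.eq_top_of_isUnit_mem ((Submodule.Quotient.eq S).1 hm.symm)
      (Units.oneSub m hm_norm).isUnit)
  obtain ⟨g, hg_norm, hg_one⟩ := exists_dual_vector ℂ (S.mkQ 1 : A ⧸ S)
    (hone.trans_ne one_ne_zero)
  let φ : StrongDual ℂ A := g.comp S.mkQL
  refine ⟨StrongDual.toWeakDual φ, ⟨?_, fun a ↦ ?_⟩, fun a ha ↦ ?_⟩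
  · exact hg_one.trans (by rw [hone]; norm_num)
  · calc ‖g (S.mkQ a)‖ ≤ 1 * ‖S.mkQ a‖ := g.le_of_opNorm_le hg_norm.le _
      _ ≤ ‖a‖ := by rw [one_mul]; exact Submodule.Quotient.norm_mk_le S a
  · exact (congrArg g ((Submodule.Quotient.mk_eq_zero S).2 ha)).trans (map_zero g)

theorem exists_mem_extremePoints_vanishing {L : Ideal A} (hL : L ≠ ⊤) :
    ∃ φ ∈ (stateSpace A).extremePoints ℝ, ∀ a ∈ L, φ a = 0 := by
  let F : Set (WeakDual ℂ A) := {φ ∈ stateSpace A | ∀ a ∈ L, φ a = 0}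
  have hF : IsCompact F := by
    refine isCompact_stateSpace.inter_right (t := {φ | ∀ a ∈ L, φ a = 0}) ?_
    simp only [Set.ofPred_forall]
    exact isClosed_biInter fun a _ ↦ isClosed_eq (WeakDual.eval_continuous a) continuous_const
  have : LocallyConvexSpace ℝ (WeakDual ℂ A) :=
    (topDualPairing ℂ A).weakBilin_withSeminorms.toLocallyConvexSpace
  obtain ⟨φ, hφ⟩ := hF.extremePoints_nonempty (exists_mem_vanishing hL)
  exact ⟨φ, (isExtreme_vanishing L).extremePoints_subset_extremePoints hφ, hφ.1.2⟩

end stateSpace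

end States

theorem eq_top_of_denseRange_of_forall_mem {R E α : Type*} [Semiring R] [AddCommMonoid E]
    [Module R E] [TopologicalSpace E] {S : Submodule R E} {f : α → E} (hf : DenseRange f)
    (hS : IsClosed (S : Set E)) (h : ∀ a, f a ∈ S) : S = ⊤ :=
  SetLike.coe_injective <| Set.univ_subset_iff.1 <|
    hf.closure_range.symm.subset.trans <| hS.closure_subset_iff.2 <| Set.range_subset_iff.2 h

section VectorFunctionals

variable {A H : Type*} [CStarAlgebra A] [NormedAddCommGroup H] [InnerProductSpace ℂ H]
  [CompleteSpace H] (π : A →⋆ₐ[ℂ] (H →L[ℂ] H))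

theorem inner_starAlgHom_apply_left (a : A) (x y : H) : ⟪π a x, y⟫_ℂ = ⟪x, π (star a) y⟫_ℂ := by
  rw [map_star, ContinuousLinearMap.star_eq_adjoint, ContinuousLinearMap.adjoint_inner_right]

theorem norm_inner_starAlgHom_apply_le (η : H) (a : A) : ‖⟪η, π a η⟫_ℂ‖ ≤ ‖η‖ ^ 2 * ‖a‖ :=
  calc ‖⟪η, π a η⟫_ℂ‖ ≤ ‖η‖ * ‖π a η‖ := norm_inner_le_norm _ _
    _ ≤ ‖η‖ * (‖a‖ * ‖η‖) := by
      gcongr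
      exact (π a).le_of_opNorm_le (NonUnitalStarAlgHom.norm_apply_le π a) η
    _ = ‖η‖ ^ 2 * ‖a‖ := by ring

/-- The functional `a ↦ ⟪η, π a η⟫` defined by a vector `η` of a representation `π`. -/
noncomputable def vectorFunctional (η : H) : WeakDual ℂ A :=
  StrongDual.toWeakDual <| LinearMap.mkContinuous
    { toFun a := ⟪η, π a η⟫_ℂ
      map_add' a b := by rw [map_add, add_apply, inner_add_right]
      map_smul' c a := by
        rw [map_smul, smul_apply, inner_smul_right, RingHom.id_apply,
          smul_eq_mul] }
    (‖η‖ ^ 2) (norm_inner_starAlgHom_apply_le π η)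

theorem vectorFunctional_apply (η : H) (a : A) : vectorFunctional π η a = ⟪η, π a η⟫_ℂ := rfl

theorem vectorFunctional_apply_one (η : H) : vectorFunctional π η 1 = (‖η‖ ^ 2 : ℝ) := by
  rw [vectorFunctional_apply, map_one, one_apply_eq_self, inner_self_eq_norm_sq_to_K]
  norm_cast

theorem inv_norm_sq_smul_vectorFunctional_mem_stateSpace {η : H} (hη : η ≠ 0) :
    (‖η‖ ^ 2)⁻¹ • vectorFunctional π η ∈ stateSpace A := by
  have hpos : 0 < ‖η‖ ^ 2 := by positivity
  refine ⟨?_, fun a ↦ ?_⟩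
  · change (‖η‖ ^ 2)⁻¹ • vectorFunctional π η 1 = 1
    rw [vectorFunctional_apply_one, Complex.real_smul, ← Complex.ofReal_mul,
      inv_mul_cancel₀ hpos.ne', Complex.ofReal_one]
  · change ‖(‖η‖ ^ 2)⁻¹ • vectorFunctional π η a‖ ≤ ‖a‖
    rw [norm_smul, Real.norm_of_nonneg (inv_nonneg.2 hpos.le), inv_mul_le_iff₀ hpos]
    exact norm_inner_starAlgHom_apply_le π η a

variable {π} {S : Submodule ℂ H} {p q ξ : H}

theorem starAlgHom_apply_mem_orthogonal (hS : ∀ a, ∀ x ∈ S, π a x ∈ S) (a : A) (hq : q ∈ Sᗮ) :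
    π a q ∈ Sᗮ := by
  intro y hy
  simpa only [inner_starAlgHom_apply_left, star_star] using hq _ (hS (star a) y hy)

theorem vectorFunctional_add_of_mem_orthogonal (hS : ∀ a, ∀ x ∈ S, π a x ∈ S) (hp : p ∈ S)
    (hq : q ∈ Sᗮ) :
    vectorFunctional π (p + q) = vectorFunctional π p + vectorFunctional π q := by
  refine DFunLike.ext _ _ fun a ↦ ?_
  have hpq : ⟪p, π a q⟫_ℂ = 0 := starAlgHom_apply_mem_orthogonal hS a hq p hp
  have hqp : ⟪q, π a p⟫_ℂ = 0 := (S.mem_orthogonal' q).1 hq _ (hS a p hp)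
  change ⟪p + q, π a (p + q)⟫_ℂ = ⟪p, π a p⟫_ℂ + ⟪q, π a q⟫_ℂ
  rw [map_add, inner_add_left, inner_add_right, inner_add_right, hpq, hqp, add_zero, zero_add]

theorem vectorFunctional_eq_smul_of_mem_extremePoints (hS : ∀ a, ∀ x ∈ S, π a x ∈ S)
    (hp : p ∈ S) (hq : q ∈ Sᗮ) (hp₀ : p ≠ 0) (hq₀ : q ≠ 0)
    (hext : vectorFunctional π (p + q) ∈ (stateSpace A).extremePoints ℝ) :
    vectorFunctional π p = ‖p‖ ^ 2 • vectorFunctional π (p + q) := by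
  have hp_pos : 0 < ‖p‖ ^ 2 := by positivity
  have hq_pos : 0 < ‖q‖ ^ 2 := by positivity
  have hadd := vectorFunctional_add_of_mem_orthogonal hS hp hq
  have hsum : ‖p‖ ^ 2 + ‖q‖ ^ 2 = 1 := by
    have hone : vectorFunctional π p 1 + vectorFunctional π q 1 = 1 :=
      (congrArg (· 1) hadd).symm.trans hext.1.1
    rw [vectorFunctional_apply_one, vectorFunctional_apply_one] at hone
    exact_mod_cast hone
  have hseg : vectorFunctional π (p + q) ∈ openSegment ℝ
      ((‖p‖ ^ 2)⁻¹ • vectorFunctional π p) ((‖q‖ ^ 2)⁻¹ • vectorFunctional π q) :=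
    ⟨_, _, hp_pos, hq_pos, hsum,
      (congrArg₂ (· + ·) (smul_inv_smul₀ hp_pos.ne' _) (smul_inv_smul₀ hq_pos.ne' _)).trans
        hadd.symm⟩
  have heq := hext.2 (inv_norm_sq_smul_vectorFunctional_mem_stateSpace π hp₀)
    (inv_norm_sq_smul_vectorFunctional_mem_stateSpace π hq₀) hseg
  exact (inv_smul_eq_iff₀ hp_pos.ne').1 heq

theorem eq_smul_of_vectorFunctional_eq_smul (hS : ∀ a, ∀ x ∈ S, π a x ∈ S) (hp : p ∈ S)
    (hq : q ∈ Sᗮ) (hpq : DenseRange fun a ↦ π a (p + q)) {t : ℝ}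
    (h : vectorFunctional π p = t • vectorFunctional π (p + q)) : p = t • (p + q) := by
  have hort (a : A) : ⟪p - t • (p + q), π a (p + q)⟫_ℂ = 0 := by
    have hp_apply : ⟪p, π a p⟫_ℂ = t • ⟪p + q, π a (p + q)⟫_ℂ := congrArg (· a) h
    have hcross : ⟪p, π a q⟫_ℂ = 0 := starAlgHom_apply_mem_orthogonal hS a hq p hp
    rw [inner_sub_left, inner_smul_left_eq_smul, ← hp_apply, map_add, inner_add_right, hcross,
      add_zero, sub_self]
  have htop := eq_top_of_denseRange_of_forall_mem hpq
    (Submodule.isClosed_orthogonal (ℂ ∙ (p - t • (p + q))))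
    fun a ↦ Submodule.mem_orthogonal_singleton_iff_inner_right.2 (hort a)
  rw [Submodule.orthogonal_eq_top_iff, Submodule.span_singleton_eq_bot] at htop
  exact sub_eq_zero.1 htop

theorem eq_bot_or_eq_top_of_vectorFunctional_mem_extremePoints
    (hξ : DenseRange fun a ↦ π a ξ)
    (hext : vectorFunctional π ξ ∈ (stateSpace A).extremePoints ℝ)
    (hS_closed : IsClosed (S : Set H)) (hS : ∀ a, ∀ x ∈ S, π a x ∈ S) : S = ⊥ ∨ S = ⊤ := by
  have : CompleteSpace S := hS_closed.completeSpace_coe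
  obtain ⟨p, hp, q, hq, rfl⟩ := S.exists_add_mem_mem_orthogonal ξ
  rcases eq_or_ne p 0 with rfl | hp₀
  · refine .inl ((Submodule.orthogonal_eq_top_iff S).1 ?_)
    refine eq_top_of_denseRange_of_forall_mem hξ S.isClosed_orthogonal fun a ↦ ?_
    exact starAlgHom_apply_mem_orthogonal hS a (by rwa [zero_add])
  · refine .inr (eq_top_of_denseRange_of_forall_mem hξ hS_closed fun a ↦ hS a _ ?_)
    rcases eq_or_ne q 0 with rfl | hq₀
    · rwa [add_zero]
    have hp_smul := eq_smul_of_vectorFunctional_eq_smul hS hp hq hξ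
      (vectorFunctional_eq_smul_of_mem_extremePoints hS hp hq hp₀ hq₀ hext)
    rw [← inv_smul_eq_iff₀ (by positivity)] at hp_smul
    rw [← hp_smul, ← Complex.coe_smul]
    exact S.smul_mem _ hp

end VectorFunctionals

section GNS

variable {A : Type} [CStarAlgebra A]

theorem exists_irredRep_vectorFunctional_eq {φ : WeakDual ℂ A}
    (hφ : φ ∈ (stateSpace A).extremePoints ℝ) :
    ∃ r : IrredRep A, ∃ ξ : r.H, vectorFunctional r.ρ ξ = φ := by
  let := CStarAlgebra.spectralOrder A
  have := CStarAlgebra.spectralOrderedRing A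
  let f := stateSpace.toPositiveLinearMap hφ.1
  let ξ : f.GNS := (f.toPreGNS 1 : f.PreGNS)
  have hξ_apply (a : A) : f.gnsStarAlgHom a ξ = (f.toPreGNS a : f.PreGNS) := by
    change f.gnsNonUnitalStarAlgHom a (f.toPreGNS 1 : f.PreGNS) = _
    rw [f.gnsNonUnitalStarAlgHom_apply_coe]
    simp
  have hφ_eq : vectorFunctional f.gnsStarAlgHom ξ = φ := by
    refine DFunLike.ext _ _ fun a ↦ ?_
    rw [vectorFunctional_apply, hξ_apply, UniformSpace.Completion.inner_coe,
      PositiveLinearMap.preGNS_inner_def]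
    simp only [PositiveLinearMap.ofPreGNS_toPreGNS, star_one, one_mul]
    rfl
  have hξ_dense : DenseRange fun a ↦ f.gnsStarAlgHom a ξ := by
    simp_rw [hξ_apply]
    exact UniformSpace.Completion.denseRange_coe.comp f.toPreGNS.surjective.denseRange
      (UniformSpace.Completion.continuous_coe _)
  have hξ_ne : ξ ≠ 0 := by
    intro h
    have := hφ.1.1
    rw [← hφ_eq, vectorFunctional_apply_one, h] at this
    simp at this
  have : Nontrivial f.GNS := ⟨ξ, 0, hξ_ne⟩
  exact ⟨{ H := f.GNS
           ρ := f.gnsStarAlgHom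
           irred := fun _ ↦ eq_bot_or_eq_top_of_vectorFunctional_mem_extremePoints hξ_dense
             (hφ_eq ▸ hφ) }, ξ, hφ_eq⟩

theorem exists_irredRep_forall_apply_eq_zero {L : Ideal A} (hL : L ≠ ⊤) :
    ∃ r : IrredRep A, ∃ ξ : r.H, ξ ≠ 0 ∧ ∀ a ∈ L, r.ρ a ξ = 0 := by
  obtain ⟨φ, hφ, hφL⟩ := stateSpace.exists_mem_extremePoints_vanishing hL
  obtain ⟨r, ξ, rfl⟩ := exists_irredRep_vectorFunctional_eq hφ
  refine ⟨r, ξ, ?_, fun a ha ↦ ?_⟩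
  · rintro rfl
    have := hφ.1.1
    simp [vectorFunctional_apply_one] at this
  · have h := hφL (star a * a) (L.mul_mem_left _ ha)
    rwa [vectorFunctional_apply, map_mul, mul_apply_eq_comp, ← star_star a,
      ← inner_starAlgHom_apply_left, star_star, inner_self_eq_zero] at h

end GNS

section SumsOfSquares

variable {A ι : Type*} [CStarAlgebra A] [Fintype ι]

-- Cauchy-Schwarz in the Hilbert `A`-module `ι → A`; its inner product is `⟪x, y⟫ = ∑ yᵢ * star xᵢ`.
theorem star_sum_mul_sum_le_norm_smul [PartialOrder A] [StarOrderedRing A] (a b : ι → A) :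
    star (∑ i, star (a i) * b i) * ∑ i, star (a i) * b i ≤
      ‖∑ i, star (a i) * a i‖ • ∑ i, star (b i) * b i := by
  let x (c : ι → A) : WithCStarModule A (ι → A) :=
    (WithCStarModule.equiv A (ι → A)).symm fun i ↦ star (c i)
  have hinner (c d : ι → A) : inner A (x c) (x d) = ∑ i, star (d i) * c i := by
    rw [WithCStarModule.pi_inner]
    simp [x, WithCStarModule.inner_def]
  have hcs := CStarModule.inner_mul_inner_swap_le (A := A) (x := x a) (y := x b)
  rw [← CStarModule.star_inner (x b) (x a), WithCStarModule.pi_norm_sq] at hcs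
  simpa only [← WithCStarModule.pi_inner, hinner] using hcs

theorem norm_sum_star_mul_sq_le (a b : ι → A) :
    ‖∑ i, star (a i) * b i‖ ^ 2 ≤ ‖∑ i, star (a i) * a i‖ * ‖∑ i, star (b i) * b i‖ := by
  let := CStarAlgebra.spectralOrder A
  have := CStarAlgebra.spectralOrderedRing A
  rw [sq, ← CStarRing.norm_star_mul_self]
  refine (CStarAlgebra.norm_le_norm_of_nonneg_of_le (star_mul_self_nonneg _)
    (star_sum_mul_sum_le_norm_smul a b)).trans_eq ?_
  rw [norm_smul, norm_norm]

theorem norm_sum_smul_star_mul_self_le {e : ι → A} (he : ∑ i, star (e i) * e i = 1) {μ : ι → ℂ}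
    {ε : ℝ} (hε : 0 ≤ ε) (hμ : ∀ i, e i ≠ 0 → ‖μ i‖ ≤ ε) :
    ‖∑ i, μ i • (star (e i) * e i)‖ ≤ ε := by
  rcases subsingleton_or_nontrivial A with hA | hA
  · rwa [Subsingleton.elim (∑ i, _) (0 : A), norm_zero]
  let := CStarAlgebra.spectralOrder A
  have := CStarAlgebra.spectralOrderedRing A
  have hterm (i : ι) : star (μ i • e i) * (μ i • e i) ≤ ε ^ 2 • (star (e i) * e i) := by
    rcases eq_or_ne (e i) 0 with hi | hi
    · simp [hi]
    · have hsq : star (μ i • e i) * (μ i • e i) = ‖μ i‖ ^ 2 • (star (e i) * e i) := by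
        rw [star_smul, smul_mul_smul_comm, Complex.star_def, Complex.conj_mul', ← Complex.coe_smul,
          Complex.ofReal_pow]
      rw [hsq]
      have := hμ i hi
      gcongr
      exact star_mul_self_nonneg _
  have hsum : ‖∑ i, star (μ i • e i) * (μ i • e i)‖ ≤ ε ^ 2 := by
    calc ‖∑ i, star (μ i • e i) * (μ i • e i)‖ ≤ ‖∑ i, ε ^ 2 • (star (e i) * e i)‖ :=
          CStarAlgebra.norm_le_norm_of_nonneg_of_le
            (Finset.sum_nonneg fun i _ ↦ star_mul_self_nonneg _)
            (Finset.sum_le_sum fun i _ ↦ hterm i)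
      _ = ε ^ 2 := by
        rw [← Finset.smul_sum, he, norm_smul, norm_one, mul_one, Real.norm_of_nonneg (sq_nonneg ε)]
  refine (sq_le_sq₀ (norm_nonneg _) hε).1 ?_
  have hcs := norm_sum_star_mul_sq_le e fun i ↦ μ i • e i
  simp only [mul_smul_comm, he, norm_one, one_mul] at hcs hsum
  exact hcs.trans hsum

theorem exists_sum_star_mul_self_eq_one {f : ι → A} (hf : ∑ i, f i = 1) :
    ∃ u, ∑ i, star (f i * u) * (f i * u) = 1 := by
  let := CStarAlgebra.spectralOrder A
  have := CStarAlgebra.spectralOrderedRing A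
  let h := ∑ i, star (f i) * f i
  have hcs : 1 ≤ ‖∑ _ : ι, star (1 : A) * 1‖ • h := by
    simpa only [star_one, one_mul, mul_one, hf] using star_sum_mul_sum_le_norm_smul (fun _ ↦ 1) f
  have hunit : IsUnit h := by
    have hunit_smul := CStarAlgebra.isUnit_of_le 1 hcs
    rw [Algebra.smul_def, (Algebra.commute_algebraMap_left _ h).isUnit_mul_iff] at hunit_smul
    exact hunit_smul.2
  have hpos : IsStrictlyPositive h :=
    hunit.isStrictlyPositive (Finset.sum_nonneg fun i _ ↦ star_mul_self_nonneg _)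
  let u : A := h ^ (-(1 / 2) : ℝ)
  have hu : star u = u := (IsSelfAdjoint.of_nonneg CFC.rpow_nonneg).star_eq
  refine ⟨u, ?_⟩
  calc ∑ i, star (f i * u) * (f i * u) = u * h * u := by
        simp only [star_mul, hu, h, Finset.mul_sum, Finset.sum_mul, mul_assoc]
    _ = 1 := CFC.conjugate_rpow_neg_one_half h hpos

end SumsOfSquares

theorem isUnit_of_span_singleton_eq_top {R : Type*} [Semiring R] [StarRing R] {b : R}
    (hb : IsSelfAdjoint b) (h : Ideal.span {b} = ⊤) : IsUnit b := by
  obtain ⟨c, hc⟩ := Ideal.mem_span_singleton'.1 (h.symm ▸ Submodule.mem_top : (1 : R) ∈ _)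
  have hc' : b * star c = 1 := by rw [← star_one, ← hc, star_mul, hb.star_eq]
  exact isUnit_iff_exists.2 ⟨c, left_inv_eq_right_inv hc hc' ▸ hc', hc⟩

-- `f` and `g` are bumps around `c` and `d` with disjoint supports.
theorem exists_cfc_ne_zero_mul_eq_zero {A : Type*} [CStarAlgebra A] {a : A} [IsStarNormal a]
    {c d : ℂ} (hc : c ∈ spectrum ℂ a) (hd : d ∈ spectrum ℂ a) (hcd : c ≠ d) :
    ∃ f g : ℂ → ℂ, cfc f a ≠ 0 ∧ cfc g a ≠ 0 ∧ cfc f a * cfc g a = 0 := by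
  let bump (e x : ℂ) : ℂ := (max 0 (dist c d / 2 - dist x e) : ℝ)
  have hcont (e : ℂ) : Continuous (bump e) := by fun_prop
  have hne {e : ℂ} (he : e ∈ spectrum ℂ a) : cfc (bump e) a ≠ 0 := by
    intro h
    have hvanish : bump e e = 0 := eqOn_of_cfc_eq_cfc (h.trans (cfc_const_zero ℂ a).symm)
      (hcont e).continuousOn continuousOn_const inferInstance he
    rw [Complex.ofReal_eq_zero, dist_self, sub_zero] at hvanish
    exact hvanish.not_gt (lt_max_of_lt_right (half_pos (dist_pos.2 hcd)))
  refine ⟨bump c, bump d, hne hc, hne hd, ?_⟩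
  rw [← cfc_mul _ _ a (hcont c).continuousOn (hcont d).continuousOn, ← cfc_const_zero ℂ a]
  congr 1 with x
  rcases lt_or_ge (dist x c) (dist c d / 2) with h | h
  · have := dist_triangle_left c d x
    simp [bump, max_eq_left (by linarith : dist c d / 2 - dist x d ≤ 0)]
  · simp [bump, max_eq_left (by linarith : dist c d / 2 - dist x c ≤ 0)]

section Urysohn

theorem exists_continuousMap_eq_one_forall_notMem_eq_zero {X : Type*} [TopologicalSpace X]
    [CompletelyRegularSpace X] {x : X} {U : Set X} (hU : IsOpen U) (hx : x ∈ U) :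
    ∃ f : C(X, ℂ), f x = 1 ∧ ∀ y ∉ U, f y = 0 := by
  obtain ⟨g, hg, hgx, hgU⟩ := CompletelyRegularSpace.completely_regular_isOpen x U hU hx
  refine ⟨⟨fun y ↦ 1 - (g y : ℝ), by fun_prop⟩, ?_, fun y hy ↦ ?_⟩
  · simp [hgx]
  · simp [hgU hy]

theorem exists_characterSpace_apply_eq_one_forall_notMem_eq_zero {B : Type*} [CommCStarAlgebra B]
    {χ : WeakDual.characterSpace ℂ B} {V : Set (WeakDual.characterSpace ℂ B)} (hV : IsOpen V)
    (hχ : χ ∈ V) : ∃ b : B, χ b = 1 ∧ ∀ φ ∉ V, φ b = 0 := by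
  obtain ⟨f, hf, hfV⟩ := exists_continuousMap_eq_one_forall_notMem_eq_zero hV hχ
  obtain ⟨b, rfl⟩ := (gelfandStarTransform B).surjective f
  exact ⟨b, hf, hfV⟩

end Urysohn

namespace IrredRep

variable {A : Type} [CStarAlgebra A] (r : IrredRep A)

theorem continuous_ρ : Continuous r.ρ :=
  AddMonoidHomClass.continuous_of_bound r.ρ 1 fun a ↦ by
    simpa using NonUnitalStarAlgHom.norm_apply_le r.ρ a

theorem eq_zero_or_eq_zero_of_forall_apply_apply_eq_zero {T : r.H →L[ℂ] r.H} {x : r.H}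
    (h : ∀ a, T (r.ρ a x) = 0) : T = 0 ∨ x = 0 := by
  let S : Submodule ℂ r.H := ⨅ a, LinearMap.ker (T ∘L r.ρ a).toLinearMap
  have hS {y : r.H} : y ∈ S ↔ ∀ a, T (r.ρ a y) = 0 := by
    simp [S]
  have hclosed : IsClosed (S : Set r.H) := by
    rw [Submodule.coe_iInf]
    exact isClosed_iInter fun a ↦ (T ∘L r.ρ a).isClosed_ker
  have hinv (a : A) (y : r.H) (hy : y ∈ S) : r.ρ a y ∈ S := by
    refine hS.2 fun b ↦ ?_
    rw [← mul_apply_eq_comp (r.ρ b), ← map_mul]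
    exact hS.1 hy _
  have hx : x ∈ S := hS.2 h
  refine (r.irred S hclosed hinv).symm.imp (fun htop ↦ ?_) fun hbot ↦ by simpa [hbot] using hx
  ext y
  simpa using hS.1 (htop ▸ Submodule.mem_top : y ∈ S) 1

theorem eq_zero_or_eq_zero_of_forall_mul_mul_eq_zero {S T : r.H →L[ℂ] r.H}
    (h : ∀ a, S * r.ρ a * T = 0) : S = 0 ∨ T = 0 := by
  refine or_iff_not_imp_left.2 fun hS ↦ ContinuousLinearMap.ext fun x ↦ ?_
  refine (r.eq_zero_or_eq_zero_of_forall_apply_apply_eq_zero fun a ↦ ?_).resolve_left hS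
  exact DFunLike.congr_fun (h a) x

-- Two distinct spectral values of `T` would give nonzero operators `cfc f T` and `cfc g T` with
-- `cfc f T * r.ρ a * cfc g T = r.ρ a * (cfc f T * cfc g T) = 0` for all `a`.
theorem mem_bot_of_commute {T : r.H →L[ℂ] r.H} [hT : IsStarNormal T]
    (h : ∀ a, Commute T (r.ρ a)) : T ∈ (⊥ : Subalgebra ℂ (r.H →L[ℂ] r.H)) := by
  obtain ⟨c, hc⟩ := (spectrum.nonempty T : (spectrum ℂ T).Nonempty)
  refine Algebra.mem_bot.2 ⟨c, Eq.symm ?_⟩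
  refine CFC.eq_algebraMap_of_spectrum_subset_singleton T c fun d hd ↦ ?_
  by_contra hdc
  obtain ⟨f, g, hf, hg, hfg⟩ := exists_cfc_ne_zero_mul_eq_zero hd hc hdc
  refine (r.eq_zero_or_eq_zero_of_forall_mul_mul_eq_zero fun a ↦ ?_).elim hf hg
  have hcomm : Commute (cfc f T) (r.ρ a) :=
    (h a).cfc (hT.commute_star_right (h a).symm).symm f
  rw [hcomm.eq, mul_assoc, hfg, mul_zero]

theorem apply_mem_bot_of_mem_center {z : A} (hz : z ∈ Subalgebra.center ℂ A) :
    r.ρ z ∈ (⊥ : Subalgebra ℂ (r.H →L[ℂ] r.H)) := by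
  rw [Subalgebra.mem_center_iff] at hz
  have : IsStarNormal (r.ρ z) := ⟨by
    rw [← map_star, Commute, SemiconjBy, ← map_mul, ← map_mul, hz]⟩
  exact r.mem_bot_of_commute fun a ↦ (Commute.map (hz a) r.ρ).symm

theorem exists_norm_apply_eq [Nontrivial A] (a : A) : ∃ r : IrredRep A, ‖r.ρ a‖ = ‖a‖ := by
  let := CStarAlgebra.spectralOrder A
  have := CStarAlgebra.spectralOrderedRing A
  let b : A := algebraMap ℝ A ‖star a * a‖ - star a * a
  have hb_sa : IsSelfAdjoint b := (IsSelfAdjoint.algebraMap A (.all _)).sub (.star_mul_self a)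
  have hb : Ideal.span {b} ≠ ⊤ := fun h ↦
    CStarAlgebra.norm_mem_spectrum_of_nonneg (star_mul_self_nonneg a)
      (isUnit_of_span_singleton_eq_top hb_sa h)
  obtain ⟨r, ξ, hξ, hbξ⟩ := exists_irredRep_forall_apply_eq_zero hb
  have heigen : (‖star a * a‖ : ℂ) • ξ = r.ρ (star a * a) ξ := by
    have := hbξ b (Ideal.mem_span_singleton_self b)
    rwa [map_sub, Algebra.algebraMap_eq_smul_one, ← Complex.coe_smul, map_smul, map_one,
      sub_apply, sub_eq_zero] at this
  have hle : ‖star a * a‖ ≤ ‖r.ρ (star a * a)‖ := by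
    refine le_of_mul_le_mul_right ?_ (norm_pos_iff.2 hξ)
    calc ‖star a * a‖ * ‖ξ‖ = ‖r.ρ (star a * a) ξ‖ := by
          rw [← heigen, norm_smul, Complex.norm_real, norm_norm]
      _ ≤ ‖r.ρ (star a * a)‖ * ‖ξ‖ := (r.ρ (star a * a)).le_opNorm ξ
  rw [map_mul, map_star, CStarRing.norm_star_mul_self, CStarRing.norm_star_mul_self] at hle
  exact ⟨r, (NonUnitalStarAlgHom.norm_apply_le r.ρ a).antisymm
    ((mul_self_le_mul_self_iff (norm_nonneg _) (norm_nonneg _)).2 hle)⟩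

theorem norm_le_of_forall_norm_apply_le {a : A} {ε : ℝ} (hε : 0 ≤ ε)
    (h : ∀ r : IrredRep A, ‖r.ρ a‖ ≤ ε) : ‖a‖ ≤ ε := by
  rcases subsingleton_or_nontrivial A with hA | hA
  · rwa [Subsingleton.elim a 0, norm_zero]
  · obtain ⟨r, hr⟩ := exists_norm_apply_eq a
    exact hr ▸ h r

theorem eq_zero_of_forall_apply_eq_zero {a : A} (h : ∀ r : IrredRep A, r.ρ a = 0) : a = 0 :=
  norm_le_zero_iff.1 <| norm_le_of_forall_norm_apply_le le_rfl fun r ↦ by rw [h r, norm_zero]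

theorem eq_of_forall_apply_eq {a b : A} (h : ∀ r : IrredRep A, r.ρ a = r.ρ b) : a = b :=
  sub_eq_zero.1 <| eq_zero_of_forall_apply_eq_zero fun r ↦ by rw [map_sub, h r, sub_self]

end IrredRep

section Center

variable {A : Type*} [CStarAlgebra A]

instance completeSpace_center : CompleteSpace (Subalgebra.center ℂ A) :=
  (Set.centralizer_univ (M := A) ▸ Set.isClosed_centralizer Set.univ :
    IsClosed (Set.center A)).completeSpace_coe

/-- The center of a C*-algebra as a commutative C*-algebra. This is not an instance, so that the
topology and the algebra structure of the center remain those of a subalgebra. -/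
noncomputable abbrev commCStarAlgebraCenter : CommCStarAlgebra (Subalgebra.center ℂ A) where
  __ := SubringClass.toNormedRing (Subalgebra.center ℂ A)
  __ := (Subalgebra.center ℂ A).toNormedAlgebra
  mul_comm := mul_comm
  star z := ⟨star z.1, Set.star_mem_center z.2⟩
  star_involutive z := Subtype.ext (star_star z.1)
  star_mul z w := Subtype.ext (star_mul z.1 w.1)
  star_add z w := Subtype.ext (star_add z.1 w.1)
  star_smul c z := Subtype.ext (star_smul c z.1)
  norm_mul_self_le z := CStarRing.norm_mul_self_le z.1
  complete := CompleteSpace.complete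

theorem exists_center_apply_eq_one_forall_notMem_eq_zero
    {χ : WeakDual.characterSpace ℂ (Subalgebra.center ℂ A)}
    {V : Set (WeakDual.characterSpace ℂ (Subalgebra.center ℂ A))} (hV : IsOpen V) (hχ : χ ∈ V) :
    ∃ z : Subalgebra.center ℂ A, χ z = 1 ∧ ∀ φ ∉ V, φ z = 0 := by
  let := commCStarAlgebraCenter (A := A)
  exact exists_characterSpace_apply_eq_one_forall_notMem_eq_zero hV hχ

end Center

namespace IrredRep

variable {A : Type} [CStarAlgebra A]

/-- The character of the center through which an irreducible representation acts on it; the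
restriction of `r` to `Z(A)`. -/
noncomputable def centralCharacter (r : IrredRep A) :
    WeakDual.characterSpace ℂ (Subalgebra.center ℂ A) :=
  WeakDual.CharacterSpace.equivAlgHom.symm <|
    (Algebra.botEquiv ℂ (r.H →L[ℂ] r.H)).toAlgHom.comp <|
      ((r.ρ : A →ₐ[ℂ] r.H →L[ℂ] r.H).comp (Subalgebra.center ℂ A).val).codRestrict ⊥
        fun z ↦ r.apply_mem_bot_of_mem_center z.2

theorem apply_center_eq_centralCharacter_smul_one (r : IrredRep A) (z : Subalgebra.center ℂ A) :
    r.ρ z = r.centralCharacter z • 1 := by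
  rw [← Algebra.algebraMap_eq_smul_one]
  exact (congrArg Subtype.val ((Algebra.botEquiv ℂ (r.H →L[ℂ] r.H)).symm_apply_apply
    ⟨r.ρ z, r.apply_mem_bot_of_mem_center z.2⟩)).symm

theorem centralCharacter_apply_eq_iff {r : IrredRep A} {z : Subalgebra.center ℂ A} {c : ℂ} :
    r.centralCharacter z = c ↔ r.ρ z = c • 1 := by
  rw [apply_center_eq_centralCharacter_smul_one]
  exact (smul_left_injective ℂ (one_ne_zero (α := r.H →L[ℂ] r.H))).eq_iff.symm

end IrredRep

/-- The spectrum `Â` of a unital C*-algebra. -/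
abbrev CStarSpectrum (A : Type) [CStarAlgebra A] := Quot (UEquiv (A := A))

namespace CStarSpectrum

variable {A : Type} [CStarAlgebra A]

/-- The topology on `Â` pulled back from the hull-kernel topology on the primitive ideals. -/
instance : TopologicalSpace (CStarSpectrum A) :=
  TopologicalSpace.generateFrom
    {U | ∃ J : Ideal A, U = {x : CStarSpectrum A | ∃ r : IrredRep A,
      Quot.mk _ r = x ∧ ¬ J ≤ RingHom.ker r.ρ.toRingHom}}

/-- The primitive ideal of a point of the spectrum. -/
def kernel : CStarSpectrum A → Ideal A :=
  Quot.lift (fun r ↦ RingHom.ker r.ρ.toRingHom) <| by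
    rintro r₁ r₂ ⟨u, hu⟩
    ext a
    change r₁.ρ a = 0 ↔ r₂.ρ a = 0
    constructor <;> intro h <;> ext x
    · rw [← u.apply_symm_apply x, hu, h]
      simp
    · apply u.injective
      rw [← hu, h]
      simp

variable {x : CStarSpectrum A} {a c d : A} {U : Set (CStarSpectrum A)}

theorem mem_kernel_mk {r : IrredRep A} : a ∈ kernel (Quot.mk _ r) ↔ r.ρ a = 0 := Iff.rfl

theorem one_notMem_kernel : 1 ∉ kernel x := by
  induction x using Quot.ind with | mk r =>
  rw [mem_kernel_mk, map_one]
  exact one_ne_zero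

instance : (kernel x).IsTwoSided := by
  induction x using Quot.ind with | mk r =>
  exact inferInstanceAs (RingHom.ker r.ρ.toRingHom).IsTwoSided

theorem exists_mul_mul_notMem_kernel (hc : c ∉ kernel x) (hd : d ∉ kernel x) :
    ∃ a, c * a * d ∉ kernel x := by
  induction x using Quot.ind with | mk r =>
  by_contra! h
  refine (r.eq_zero_or_eq_zero_of_forall_mul_mul_eq_zero (S := r.ρ c) (T := r.ρ d)
    fun a ↦ ?_).elim hc hd
  rw [← map_mul, ← map_mul]
  exact h a

theorem isOpen_setOf_not_le_kernel (J : Ideal A) :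
    IsOpen {x : CStarSpectrum A | ¬ J ≤ kernel x} := by
  refine TopologicalSpace.isOpen_generateFrom_of_mem ⟨J, Set.ext fun x ↦ ⟨fun hx ↦ ?_, ?_⟩⟩
  · induction x using Quot.ind with | mk r =>
    exact ⟨r, rfl, hx⟩
  · rintro ⟨r, rfl, hr⟩
    exact hr

theorem isOpen_setOf_notMem_kernel (a : A) : IsOpen {x : CStarSpectrum A | a ∉ kernel x} := by
  simpa only [Ideal.span_singleton_le_iff_mem] using isOpen_setOf_not_le_kernel (Ideal.span {a})

/-- The elements of `A` annihilated by every representation in `F`; the kernel of the set `F` in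
the hull-kernel correspondence. -/
def vanishingIdeal (F : Set (CStarSpectrum A)) : Ideal A := ⨅ x ∈ F, kernel x

theorem mem_vanishingIdeal {F : Set (CStarSpectrum A)} :
    a ∈ vanishingIdeal F ↔ ∀ x ∈ F, a ∈ kernel x := by
  simp only [vanishingIdeal, Submodule.mem_iInf]

theorem not_vanishingIdeal_compl_le_kernel (hU : IsOpen U) (hx : x ∈ U) :
    ¬ vanishingIdeal Uᶜ ≤ kernel x := by
  rw [SetLike.not_le_iff_exists]
  induction hU with
  | basic _ hU =>
    obtain ⟨J, rfl⟩ := hU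
    obtain ⟨r, rfl, hr⟩ := hx
    obtain ⟨c, hcJ, hc⟩ := SetLike.not_le_iff_exists.1 hr
    refine ⟨c, mem_vanishingIdeal.2 fun y hy ↦ ?_, hc⟩
    induction y using Quot.ind with | mk s =>
    by_contra hcs
    exact hy ⟨s, rfl, fun hle ↦ hcs (hle hcJ)⟩
  | univ => exact ⟨1, mem_vanishingIdeal.2 fun y hy ↦ (hy trivial).elim, one_notMem_kernel⟩
  | inter s t _ _ ihs iht =>
    obtain ⟨c, hcs, hc⟩ := ihs hx.1
    obtain ⟨d, hdt, hd⟩ := iht hx.2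
    obtain ⟨a, ha⟩ := exists_mul_mul_notMem_kernel hc hd
    rw [mem_vanishingIdeal] at hcs hdt
    refine ⟨c * a * d, mem_vanishingIdeal.2 fun y hy ↦ ?_, ha⟩
    by_cases hys : y ∈ s
    · exact Ideal.mul_mem_left _ _ (hdt y fun hyt ↦ hy ⟨hys, hyt⟩)
    · exact Ideal.mul_mem_right _ _ (Ideal.mul_mem_right _ _ (hcs y hys))
  | sUnion S _ ih =>
    obtain ⟨s, hsS, hxs⟩ := hx
    obtain ⟨c, hcs, hc⟩ := ih s hsS hxs
    rw [mem_vanishingIdeal] at hcs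
    exact ⟨c, mem_vanishingIdeal.2 fun y hy ↦ hcs y fun hys ↦ hy ⟨s, hsS, hys⟩, hc⟩

theorem iSup_vanishingIdeal_compl_eq_top {ι : Type*} {U : ι → Set (CStarSpectrum A)}
    (hU : ∀ i, IsOpen (U i)) (hcover : ⋃ i, U i = Set.univ) :
    ⨆ i, vanishingIdeal (U i)ᶜ = ⊤ := by
  by_contra hne
  obtain ⟨r, ξ, hξ, hkill⟩ := exists_irredRep_forall_apply_eq_zero hne
  obtain ⟨i, hi⟩ := Set.iUnion_eq_univ_iff.1 hcover (Quot.mk _ r)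
  obtain ⟨c, hcU, hc⟩ := SetLike.not_le_iff_exists.1
    (not_vanishingIdeal_compl_le_kernel (hU i) hi)
  refine (r.eq_zero_or_eq_zero_of_forall_apply_apply_eq_zero (T := r.ρ c) fun a ↦ ?_).elim hc hξ
  have hca : c * a ∈ vanishingIdeal (U i)ᶜ := mem_vanishingIdeal.2 fun y hy ↦
    Ideal.mul_mem_right _ _ (mem_vanishingIdeal.1 hcU y hy)
  rw [← mul_apply_eq_comp, ← map_mul]
  exact hkill _ (Submodule.mem_iSup_of_mem i hca)

instance : CompactSpace (CStarSpectrum A) := by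
  refine ⟨isCompact_of_finite_subcover fun {ι} U hU hcover ↦ ?_⟩
  have hone : (1 : A) ∈ ⨆ i, vanishingIdeal (U i)ᶜ :=
    iSup_vanishingIdeal_compl_eq_top hU (Set.univ_subset_iff.1 hcover) ▸ Submodule.mem_top
  obtain ⟨t, ht⟩ := Submodule.mem_iSup_iff_exists_finset.1 hone
  refine ⟨t, fun x _ ↦ ?_⟩
  by_contra hx
  simp only [Set.mem_iUnion, not_exists] at hx
  have hle : ⨆ i ∈ t, vanishingIdeal (U i)ᶜ ≤ kernel x :=
    iSup₂_le fun i hi c hc ↦ mem_vanishingIdeal.1 hc x (hx i hi)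
  exact one_notMem_kernel (hle ht)

theorem exists_partition_of_unity {ι : Type*} [Fintype ι] {U : ι → Set (CStarSpectrum A)}
    (hU : ∀ i, IsOpen (U i)) (hcover : ⋃ i, U i = Set.univ) :
    ∃ e : ι → A, (∀ i, e i ∈ vanishingIdeal (U i)ᶜ) ∧ ∑ i, star (e i) * e i = 1 := by
  have hone : (1 : A) ∈ ⨆ i, vanishingIdeal (U i)ᶜ :=
    iSup_vanishingIdeal_compl_eq_top hU hcover ▸ Submodule.mem_top
  obtain ⟨f, hfU, hf⟩ := Submodule.mem_iSup_iff_exists_finsupp _ _ |>.1 hone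
  rw [Finsupp.sum_fintype _ _ fun _ ↦ rfl] at hf
  obtain ⟨u, hu⟩ := exists_sum_star_mul_self_eq_one hf
  exact ⟨fun i ↦ f i * u, fun i ↦ mem_vanishingIdeal.2 fun y hy ↦
    Ideal.mul_mem_right _ _ (mem_vanishingIdeal.1 (hfU i) y hy), hu⟩

theorem exists_norm_apply_sub_smul_one_le (f : C(CStarSpectrum A, ℂ)) {ε : ℝ} (hε : 0 < ε) :
    ∃ a : A, ∀ r : IrredRep A, ‖r.ρ a - f (Quot.mk _ r) • 1‖ ≤ ε := by
  let U (x : CStarSpectrum A) : Set (CStarSpectrum A) := f ⁻¹' Metric.ball (f x) ε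
  have hU (x : CStarSpectrum A) : IsOpen (U x) := Metric.isOpen_ball.preimage f.continuous
  obtain ⟨t, ht⟩ := CompactSpace.elim_nhds_subcover U fun x ↦
    (hU x).mem_nhds (Metric.mem_ball_self hε)
  obtain ⟨e, heU, he⟩ := exists_partition_of_unity (U := fun x : t ↦ U x) (fun x ↦ hU x)
    ((Set.iUnion_subtype _ _).trans ht)
  refine ⟨∑ x : t, f x • (star (e x) * e x), fun r ↦ ?_⟩
  have hone : ∑ x, star (r.ρ (e x)) * r.ρ (e x) = 1 := by
    simpa only [map_sum, map_mul, map_star, map_one] using congrArg r.ρ he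
  have hdiff : r.ρ (∑ x : t, f x • (star (e x) * e x)) - f (Quot.mk _ r) • 1 =
      ∑ x : t, (f x - f (Quot.mk _ r)) • (star (r.ρ (e x)) * r.ρ (e x)) := by
    simp only [sub_smul, Finset.sum_sub_distrib, ← Finset.smul_sum, hone, map_sum, map_smul,
      map_mul, map_star]
  rw [hdiff]
  refine norm_sum_smul_star_mul_self_le hone hε.le fun x hx ↦ ?_
  have hrU : Quot.mk _ r ∈ U x := by
    by_contra h
    exact hx (mem_vanishingIdeal.1 (heU x) _ h)
  rw [← dist_eq_norm, dist_comm]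
  exact (Metric.mem_ball.1 hrU).le

theorem exists_mem_center_forall_apply_eq_smul_one (f : C(CStarSpectrum A, ℂ)) :
    ∃ z ∈ Subalgebra.center ℂ A, ∀ r : IrredRep A, r.ρ z = f (Quot.mk _ r) • 1 := by
  have hpow (n : ℕ) : (0 : ℝ) < (1 / 2) ^ n := by positivity
  choose a ha using fun n ↦ exists_norm_apply_sub_smul_one_le f (hpow n)
  have hdist (n : ℕ) : dist (a n) (a (n + 1)) ≤ 2 * (1 / 2) ^ n := by
    rw [dist_eq_norm]
    refine IrredRep.norm_le_of_forall_norm_apply_le (by positivity) fun r ↦ ?_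
    rw [map_sub, ← sub_sub_sub_cancel_right _ _ (f (Quot.mk _ r) • 1)]
    refine (norm_sub_le _ _).trans ((add_le_add (ha n r) (ha (n + 1) r)).trans ?_)
    rw [pow_succ]
    linarith [hpow n]
  obtain ⟨z, hz⟩ := cauchySeq_tendsto_of_complete
    (cauchySeq_of_le_geometric _ _ one_half_lt_one hdist)
  have hzr (r : IrredRep A) : r.ρ z = f (Quot.mk _ r) • 1 := by
    refine tendsto_nhds_unique ((r.continuous_ρ.tendsto z).comp hz) ?_
    rw [tendsto_iff_norm_sub_tendsto_zero]
    exact squeeze_zero (fun _ ↦ norm_nonneg _) (fun n ↦ ha n r)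
      (tendsto_pow_atTop_nhds_zero_of_lt_one one_half_pos.le one_half_lt_one)
  refine ⟨z, Subalgebra.mem_center_iff.2 fun b ↦ IrredRep.eq_of_forall_apply_eq fun r ↦ ?_, hzr⟩
  rw [map_mul, map_mul, hzr, mul_smul_comm, smul_mul_assoc, mul_one, one_mul]

/-- The restriction map from the spectrum of `A` to the spectrum of its center. -/
noncomputable def res :
    CStarSpectrum A → WeakDual.characterSpace ℂ (Subalgebra.center ℂ A) :=
  Quot.lift IrredRep.centralCharacter <| by
    rintro r s ⟨u, hu⟩
    ext z
    refine (IrredRep.centralCharacter_apply_eq_iff.2 ?_).symm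
    ext x
    rw [← u.apply_symm_apply x, hu, r.apply_center_eq_centralCharacter_smul_one]
    simp

theorem mem_kernel_iff_res_apply_eq_zero {x : CStarSpectrum A} {z : Subalgebra.center ℂ A} :
    z.1 ∈ kernel x ↔ res x z = 0 := by
  induction x using Quot.ind with | mk r =>
  rw [mem_kernel_mk, ← zero_smul ℂ]
  exact IrredRep.centralCharacter_apply_eq_iff.symm

theorem continuous_res : Continuous (res (A := A)) := by
  refine continuous_iff_continuousAt.2 fun x V hV ↦ ?_
  obtain ⟨W, hWV, hW, hxW⟩ := mem_nhds_iff.1 hV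
  obtain ⟨z, hxz, hz⟩ := exists_center_apply_eq_one_forall_notMem_eq_zero hW hxW
  have hx : z.1 ∉ kernel x := by
    rw [mem_kernel_iff_res_apply_eq_zero, hxz]
    exact one_ne_zero
  refine Filter.mem_map.2 ?_
  filter_upwards [(isOpen_setOf_notMem_kernel z.1).mem_nhds hx] with y hy
  refine hWV (not_imp_comm.1 (hz (res y)) ?_)
  exact mem_kernel_iff_res_apply_eq_zero.not.1 hy

theorem res_surjective : Function.Surjective (res (A := A)) := by
  by_contra! hsurj
  obtain ⟨χ, hχ⟩ := not_forall.1 hsurj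
  have hopen : IsOpen (Set.range (res (A := A)))ᶜ :=
    (isCompact_range continuous_res).isClosed.isOpen_compl
  obtain ⟨z, hχz, hz⟩ := exists_center_apply_eq_one_forall_notMem_eq_zero hopen hχ
  have hz0 : z = 0 := Subtype.ext <| IrredRep.eq_zero_of_forall_apply_eq_zero fun r ↦
    mem_kernel_mk.1 <| mem_kernel_iff_res_apply_eq_zero.2 <| hz _ <| not_not_intro ⟨_, rfl⟩
  rw [hz0, map_zero] at hχz
  exact zero_ne_one hχz

theorem res_injective [T2Space (CStarSpectrum A)] : Function.Injective (res (A := A)) := by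
  intro x y hxy
  by_contra hne
  obtain ⟨f, hfx, hfy⟩ := exists_continuousMap_eq_one_forall_notMem_eq_zero
    (isOpen_compl_singleton (x := y)) hne
  obtain ⟨z, hz, hzf⟩ := exists_mem_center_forall_apply_eq_smul_one f
  have hres (w : CStarSpectrum A) : res w ⟨z, hz⟩ = f w := by
    induction w using Quot.ind with | mk r =>
    exact IrredRep.centralCharacter_apply_eq_iff.2 (hzf r)
  rw [← hres, hxy, hres, hfy y (not_not_intro rfl)] at hfx
  exact zero_ne_one hfx

/-- The restriction map as a homeomorphism, for a Hausdorff spectrum. -/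
noncomputable def resHomeomorph [T2Space (CStarSpectrum A)] :
    CStarSpectrum A ≃ₜ WeakDual.characterSpace ℂ (Subalgebra.center ℂ A) :=
  Continuous.homeoOfEquivCompactToT2 (f := .ofBijective res ⟨res_injective, res_surjective⟩)
    continuous_res

end CStarSpectrum

/-- If the spectrum `Â` of a unital C*-algebra `A` (unitary equivalence classes
of irreducible representations, with the topology pulled back from the
hull-kernel topology on `Prim(A)`) is Hausdorff, then the restriction map
`res : Â → Ẑ(A)`, sending a class `[λ]` to the character of `Z(A)` determined
by `λ|_{Z(A)}`, is injective — hence a homeomorphism of the compact space `Â`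
onto `Ẑ(A)`. -/
theorem stmt_17 (A : Type) [CStarAlgebra A] :
    -- the spectrum `Â`
    let AHat := Quot (UEquiv (A := A))
    -- the topology on `Â`, pulled back from the hull-kernel topology on `Prim(A)`
    letI : TopologicalSpace AHat := TopologicalSpace.generateFrom
      {U | ∃ J : Ideal A, U = {x : AHat | ∃ r : IrredRep A,
        Quot.mk _ r = x ∧ ¬ J ≤ RingHom.ker r.ρ.toRingHom}}
    -- assume `Â` is Hausdorff; then:
    T2Space AHat →
      -- `res` is injective: two irreducible representations restricting to the
      -- same character of the center `Z(A)` are unitarily equivalent …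
      (∀ r₁ r₂ : IrredRep A,
        (∀ z ∈ Subalgebra.center ℂ A, ∀ c : ℂ,
          r₁.ρ z = c • (1 : r₁.H →L[ℂ] r₁.H) →
          r₂.ρ z = c • (1 : r₂.H →L[ℂ] r₂.H)) →
        Quot.mk UEquiv r₁ = Quot.mk UEquiv r₂) ∧
      -- … hence `res` is a homeomorphism of `Â` onto `Ẑ(A)`:
      ∃ e : AHat ≃ₜ WeakDual.characterSpace ℂ ↥(Subalgebra.center ℂ A),
        ∀ (r : IrredRep A) (z : ↥(Subalgebra.center ℂ A)),
          r.ρ z.val = (e (Quot.mk UEquiv r) z) • (1 : r.H →L[ℂ] r.H) := by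
  intro AHat hT2
  have : T2Space (CStarSpectrum A) := hT2
  refine ⟨fun r₁ r₂ h ↦ CStarSpectrum.res_injective ?_, CStarSpectrum.resHomeomorph,
    IrredRep.apply_center_eq_centralCharacter_smul_one⟩
  ext z
  exact (IrredRep.centralCharacter_apply_eq_iff.2 <|
    h z z.2 _ (r₁.apply_center_eq_centralCharacter_smul_one z)).symm
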